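/- If a vector x with strictly positive entries is p-larger than a vector y with strictly positive entries, then x reciprocally majorizes y, i.e., for each j = 1,...,n, the sum of reciprocals of the j smallest entries of x is at least the corresponding sum for y. -/

import Mathlib

open Finset

/-- Increasing rearrangement of a vector. -/
noncomputable def incSort {n : ℕ} (x : Fin n → ℝ) : Fin n → ℝ := x ∘ Tuple.sort x

/-- Product of the `j` smallest entries. -/
noncomputable def pprod {n : ℕ} (s : Fin n → ℝ) (j : ℕ) : ℝ :=
  ∏ i : Fin n, if (i : ℕ) < j then s i else 1

/-- Sum of reciprocals of the `j` smallest entries. -/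
noncomputable def rsum {n : ℕ} (s : Fin n → ℝ) (j : ℕ) : ℝ :=
  ∑ i : Fin n, if (i : ℕ) < j then 1 / s i else 0

/-- `x` is p-larger than `y`. -/
def PLarger {n : ℕ} (x y : Fin n → ℝ) : Prop :=
  ∀ j ≤ n, pprod (incSort x) j ≤ pprod (incSort y) j

/-- `x` reciprocally majorizes `y`. -/
def RecMajorizes {n : ℕ} (x y : Fin n → ℝ) : Prop :=
  ∀ j ≤ n, rsum (incSort y) j ≤ rsum (incSort x) j

theorem pprod_succ {n : ℕ} (s : Fin n → ℝ) {j : ℕ} (hj : j < n) :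
    pprod s (j + 1) = pprod s j * s ⟨j, hj⟩ := by
  have hs : s ⟨j, hj⟩ = ∏ i : Fin n, if i = ⟨j, hj⟩ then s i else 1 := by simp
  rw [hs, pprod, pprod, ← Finset.prod_mul_distrib]
  refine Finset.prod_congr rfl fun i _ => ?_
  rcases lt_trichotomy (i : ℕ) j with h | h | h
  · simp [h, Fin.ext_iff, h.ne, h.trans (Nat.lt_succ_self j)]
  · simp [h, Fin.ext_iff]
  · simp [Fin.ext_iff, h.ne', h.not_gt, h.not_ge]

theorem rsum_succ {n : ℕ} (s : Fin n → ℝ) {j : ℕ} (hj : j < n) :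
    rsum s (j + 1) = rsum s j + 1 / s ⟨j, hj⟩ := by
  have hs : 1 / s ⟨j, hj⟩ = ∑ i : Fin n, if i = ⟨j, hj⟩ then 1 / s i else 0 := by simp
  rw [hs, rsum, rsum, ← Finset.sum_add_distrib]
  refine Finset.sum_congr rfl fun i _ => ?_
  rcases lt_trichotomy (i : ℕ) j with h | h | h
  · simp [h, Fin.ext_iff, h.ne, h.trans (Nat.lt_succ_self j)]
  · simp [h, Fin.ext_iff]
  · simp [Fin.ext_iff, h.ne', h.not_gt, h.not_ge]

theorem pprod_pos {n : ℕ} {s : Fin n → ℝ} (hs : ∀ i, 0 < s i) (j : ℕ) : 0 < pprod s j :=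
  Finset.prod_pos fun i _ => by split_ifs <;> simp [hs]

theorem inv_mul_log_sub_log_le {a b : ℝ} (ha : 0 < a) (hb : 0 < b) :
    1 / b * (Real.log b - Real.log a) ≤ 1 / a - 1 / b := by
  rw [← Real.log_div hb.ne' ha.ne']
  calc 1 / b * Real.log (b / a) ≤ 1 / b * (b / a - 1) := by
        gcongr
        exact Real.log_le_sub_one_of_pos (div_pos hb ha)
    _ = 1 / a - 1 / b := by field_simp

/-- Summation by parts for the tangent-line bound `inv_mul_log_sub_log_le`, with the antitone
weights `1 / b i`. -/
theorem mul_log_pprod_sub_le_rsum_sub {n : ℕ} {a b : Fin n → ℝ} (ha : ∀ i, 0 < a i)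
    (hb : ∀ i, 0 < b i) (hmono : Monotone b)
    (hab : ∀ j ≤ n, pprod a j ≤ pprod b j) {j : ℕ} (hj : j ≤ n) {c : ℝ}
    (hc : ∀ i : Fin n, (i : ℕ) < j → c ≤ 1 / b i) :
    c * (Real.log (pprod b j) - Real.log (pprod a j)) ≤ rsum a j - rsum b j := by
  induction j generalizing c with
  | zero => simp [pprod, rsum]
  | succ j ih =>
    have hjn : j < n := hj
    have hlog : 0 ≤ Real.log (pprod b (j + 1)) - Real.log (pprod a (j + 1)) :=
      sub_nonneg.2 (Real.log_le_log (pprod_pos ha _) (hab _ hj))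
    have hprev := ih hjn.le (c := 1 / b ⟨j, hjn⟩) fun i hi =>
      one_div_le_one_div_of_le (hb i) (hmono (Fin.le_def.2 hi.le))
    have hlast := inv_mul_log_sub_log_le (ha ⟨j, hjn⟩) (hb ⟨j, hjn⟩)
    refine (mul_le_mul_of_nonneg_right (hc ⟨j, hjn⟩ j.lt_succ_self) hlog).trans ?_
    rw [pprod_succ a hjn, pprod_succ b hjn, rsum_succ a hjn, rsum_succ b hjn,
      Real.log_mul (pprod_pos ha j).ne' (ha _).ne', Real.log_mul (pprod_pos hb j).ne' (hb _).ne']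
    linarith

theorem plarger_implies_rec_majorizes {n : ℕ} (x y : Fin n → ℝ)
    (hx : ∀ i, 0 < x i) (hy : ∀ i, 0 < y i)
    (h : PLarger x y) : RecMajorizes x y := by
  intro j hj
  have key := mul_log_pprod_sub_le_rsum_sub (a := incSort x) (b := incSort y) (c := 0)
    (fun _ => hx _) (fun _ => hy _) (Tuple.monotone_sort y) h hj
    fun i _ => one_div_nonneg.2 (hy _).le
  linarith
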